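/- Let lambda^bullet and mu^bullet be equivariant random measures on M with intensities 1 and beta <= 1 respectively, almost surely not the zero measure. If the optimal mean transportation cost c_{e,infinity} = inf over equivariant semicouplings q^bullet of C(q^bullet) is finite, then there exists an equivariant semicoupling q^bullet of lambda^bullet and mu^bullet with C(q^bullet) = c_{e,infinity}. -/

import Mathlib

/-!
Existence of an optimal equivariant semicoupling by the direct method.

An equivariant random coupling `q` is determined by its part `r = q|_{M × B₀}` over a fundamental
domain: `q` is the *periodisation* of `r`, the sum over `g` of the `g`-translates of `r (θ_{g⁻¹} ω)`
(`periodize_restrict`), and its mean cost is the expected total cost of `r` (`meanCost_eq`,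
`cost_periodize`). Take a minimising sequence `qₙ` and its parts `rₙ`. Since `𝔼[mu B₀] = β` is
finite and nonzero, `β⁻¹ P(dω) rₙ(ω, dp)` is a probability measure on `Ω × (M × M)`. The joint law of
`ω` and of the target point is the same for all `n`, and the expected costs are bounded, so these
lifted measures are tight (`Ω` is compact, `M` is proper and the scale function tends to infinity)
and converge weakly along a subsequence. Disintegrating the limit over `Ω` gives a random measure
`q₀` whose second marginal is still `mu` restricted to `B₀` (`exists_limit_plan`); the semicoupling
sought is the periodisation of `q₀`. Equivariance and the second marginal are then immediate.

For the first marginal, the portmanteau inequality for open sets is available for sets `A ×ˢ V` with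
`A` merely measurable, because the marginal on `Ω` is fixed (`le_liminf_prod_open`). By stationarity
`𝔼[1_A q(U × M)]` is a sum over `g` of masses of such sets under the lifted measure, so Fatou's lemma
gives `𝔼[1_A q(U × M)] ≤ liminf 𝔼[1_A qₙ(U × M)] ≤ 𝔼[1_A lam(U)]` for all open `U`, which suffices
(`ae_le_of_open`). Optimality is lower semicontinuity of the cost under weak convergence.
-/

open MeasureTheory ENNReal Filter Topology
open scoped Pointwise ENNReal symmDiff

/-- The cost function on `M × M` induced by a scale function `ϑ` : `c(x,y) = ϑ(d(x,y))`. -/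
noncomputable def costFn {M : Type*} [MetricSpace M] (ϑ : ℝ → ℝ) (p : M × M) : ℝ≥0∞ :=
  ENNReal.ofReal (ϑ (dist p.1 p.2))

/-- A scale function: continuous, strictly increasing on `[0,∞)`, `ϑ(0)=0`, `ϑ(r)→∞`. -/
structure IsScaleFn (ϑ : ℝ → ℝ) : Prop where
  continuous : Continuous ϑ
  strictMono : StrictMonoOn ϑ (Set.Ici (0:ℝ))
  map_zero : ϑ 0 = 0
  tendsto_atTop : Tendsto ϑ atTop atTop

/-- Total transportation cost of a transport plan `q` for cost `c(x,y)=ϑ(d(x,y))`. -/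
noncomputable def Cost {M : Type*} [MetricSpace M] [MeasurableSpace M]
    (ϑ : ℝ → ℝ) (q : Measure (M × M)) : ℝ≥0∞ :=
  ∫⁻ p, costFn ϑ p ∂q

/-- `q` is a semicoupling of `lam` and `mu`: first marginal `≤ lam`, second marginal `= mu`. -/
def IsSemicoupling {M : Type*} [MeasurableSpace M] (lam mu : Measure M)
    (q : Measure (M × M)) : Prop :=
  q.fst ≤ lam ∧ q.snd = mu

/-- `q` is a coupling of `lam` and `mu`. -/
def IsCoupling {M : Type*} [MeasurableSpace M] (lam mu : Measure M)
    (q : Measure (M × M)) : Prop :=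
  q.fst = lam ∧ q.snd = mu

/-- A measure is compactly supported if it vanishes outside some compact set. -/
def HasCompactSupportMeas {M : Type*} [TopologicalSpace M] [MeasurableSpace M]
    (μ : Measure M) : Prop :=
  ∃ K : Set M, IsCompact K ∧ μ Kᶜ = 0

/-- The support of a measure: points all of whose neighbourhoods have positive mass. -/
def msupport {M : Type*} [TopologicalSpace M] [MeasurableSpace M] (μ : Measure M) : Set M :=
  {x | ∀ U ∈ nhds x, 0 < μ U}

/-- Monge uniqueness assumption: for compactly supported probability measures `lam ≪ m` and
`mu`, the Monge-Kantorovich problem with cost `ϑ ∘ d` has a unique minimizer, induced by a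
measurable transport map. -/
def MongeUnique {M : Type*} [MetricSpace M] [MeasurableSpace M]
    (m : Measure M) (ϑ : ℝ → ℝ) : Prop :=
  ∀ lam mu : Measure M, IsProbabilityMeasure lam → IsProbabilityMeasure mu →
    HasCompactSupportMeas lam → HasCompactSupportMeas mu → lam ≪ m →
    (∃! q : Measure (M × M), IsCoupling lam mu q ∧
        ∀ q' : Measure (M × M), IsCoupling lam mu q' → Cost ϑ q ≤ Cost ϑ q') ∧
    (∀ q : Measure (M × M),
      (IsCoupling lam mu q ∧ ∀ q' : Measure (M × M), IsCoupling lam mu q' →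
          Cost ϑ q ≤ Cost ϑ q') →
      ∃ T : M → M, Measurable T ∧ q = Measure.map (fun x => (x, T x)) lam)

section GroupSetup

variable {M : Type*} [MetricSpace M] [MeasurableSpace M]
variable {Ω : Type*} [MeasurableSpace Ω]

/-- A (strict) fundamental domain for the action of `G` on `M`: a Borel set whose translates
are pairwise disjoint and cover `M`. -/
def IsFundDom (G : Type*) [Group G] [MulAction G M] (F : Set M) : Prop :=
  MeasurableSet F ∧ ∀ x : M, ∃! g : G, x ∈ g • F

/-- Admissible sets: finite nonempty unions of translates of a fundamental domain. -/
def Adm (G : Type*) [Group G] [MulAction G M] (B : Set M) : Prop :=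
  ∃ (F : Set M) (I : Set G), IsFundDom G F ∧ I.Finite ∧ I.Nonempty ∧ B = ⋃ g ∈ I, g • F

/-- The action of `G` on `M` is properly discontinuous. -/
def ProperlyDiscontinuousAct (G : Type*) [Group G] [MulAction G M] : Prop :=
  ∀ (x : M) (K : Set M), IsCompact K → {g : G | g • x ∈ K}.Finite

/-- The action of `G` on `M` is cocompact. -/
def CocompactAct (G : Type*) [Group G] [MulAction G M] : Prop :=
  ∃ K : Set M, IsCompact K ∧ ⋃ g : G, g • K = Set.univ

/-- The action of `G` on `M` is free. -/
def FreeAct (G : Type*) [Group G] [MulAction G M] : Prop :=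
  ∀ (g : G) (x : M), g • x = x → g = 1

/-- `θ` is a measurable flow on `Ω` indexed by `G`. -/
structure IsFlow {G : Type*} [Group G] (θ : G → Ω → Ω) : Prop where
  measurable : ∀ g : G, Measurable (θ g)
  map_one : θ 1 = id
  map_mul : ∀ g h : G, θ g ∘ θ h = θ (g * h)

/-- `P` is stationary under the flow `θ`. -/
def Stationary {G : Type*} [Group G] (θ : G → Ω → Ω) (P : Measure Ω) : Prop :=
  ∀ g : G, P.map (θ g) = P

/-- An equivariant random measure: `λ^{θ_g ω}(gA) = λ^ω(A)`, i.e.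
`λ^{θ_g ω} = (g•)_* λ^ω`. -/
def EquivRandMeasure {G : Type*} [Group G] [MulAction G M] (θ : G → Ω → Ω)
    (lam : Ω → Measure M) : Prop :=
  ∀ (g : G) (ω : Ω), lam (θ g ω) = Measure.map (fun x => g • x) (lam ω)

/-- An equivariant random measure on `M × M` (under the diagonal action). -/
def EquivRandCoupling {G : Type*} [Group G] [MulAction G M] (θ : G → Ω → Ω)
    (q : Ω → Measure (M × M)) : Prop :=
  ∀ (g : G) (ω : Ω), q (θ g ω) = Measure.map (fun p : M × M => (g • p.1, g • p.2)) (q ω)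

/-- The random measure `lam` has intensity `β` (w.r.t. the reference measure `m`). -/
def HasIntensity (m : Measure M) (P : Measure Ω) (lam : Ω → Measure M) (β : ℝ≥0∞) : Prop :=
  ∀ A : Set M, MeasurableSet A → ∫⁻ ω, lam ω A ∂P = β * m A

/-- The random measure `lam` is absolutely continuous w.r.t. `m`, a.s. -/
def AbsContRand (m : Measure M) (P : Measure Ω) (lam : Ω → Measure M) : Prop :=
  ∀ᵐ ω ∂P, lam ω ≪ m

/-- A semicoupling of the random measures `lam` and `mu`. -/
def IsRandSemicoupling (P : Measure Ω) (lam mu : Ω → Measure M)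
    (q : Ω → Measure (M × M)) : Prop :=
  Measurable q ∧ ∀ᵐ ω ∂P, IsSemicoupling (lam ω) (mu ω) (q ω)

/-- A coupling of the random measures `lam` and `mu`. -/
def IsRandCoupling (P : Measure Ω) (lam mu : Ω → Measure M)
    (q : Ω → Measure (M × M)) : Prop :=
  Measurable q ∧ ∀ᵐ ω ∂P, IsCoupling (lam ω) (mu ω) (q ω)

/-- The mean transportation cost of a (semi)coupling: supremum over admissible sets `B` of the
normalized expected cost of the transport into `B`. -/
noncomputable def meanCost (G : Type*) [Group G] [MulAction G M] (m : Measure M)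
    (P : Measure Ω) (ϑ : ℝ → ℝ) (q : Ω → Measure (M × M)) : ℝ≥0∞ :=
  ⨆ B ∈ {B : Set M | Adm G B},
    (m B)⁻¹ * ∫⁻ ω, ∫⁻ p in Set.univ ×ˢ B, costFn ϑ p ∂(q ω) ∂P

/-- The optimal mean transportation cost over equivariant semicouplings. -/
noncomputable def ceInftySemi (G : Type*) [Group G] [MulAction G M] (m : Measure M)
    (P : Measure Ω) (ϑ : ℝ → ℝ) (θ : G → Ω → Ω) (lam mu : Ω → Measure M) : ℝ≥0∞ :=
  ⨅ q ∈ {q : Ω → Measure (M × M) |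
      IsRandSemicoupling P lam mu q ∧ EquivRandCoupling θ q},
    meanCost G m P ϑ q

/-- The optimal mean transportation cost over equivariant couplings. -/
noncomputable def ceInftyCoup (G : Type*) [Group G] [MulAction G M] (m : Measure M)
    (P : Measure Ω) (ϑ : ℝ → ℝ) (θ : G → Ω → Ω) (lam mu : Ω → Measure M) : ℝ≥0∞ :=
  ⨅ q ∈ {q : Ω → Measure (M × M) |
      IsRandCoupling P lam mu q ∧ EquivRandCoupling θ q},
    meanCost G m P ϑ q

/-- An optimal semicoupling: equivariant and attaining the optimal mean transportation cost. -/
def IsOptSemicoupling (G : Type*) [Group G] [MulAction G M] (m : Measure M)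
    (P : Measure Ω) (ϑ : ℝ → ℝ) (θ : G → Ω → Ω) (lam mu : Ω → Measure M)
    (q : Ω → Measure (M × M)) : Prop :=
  IsRandSemicoupling P lam mu q ∧ EquivRandCoupling θ q ∧
    meanCost G m P ϑ q = ceInftySemi G m P ϑ θ lam mu

/-- An optimal coupling: equivariant and attaining the optimal mean transportation cost. -/
def IsOptCoupling (G : Type*) [Group G] [MulAction G M] (m : Measure M)
    (P : Measure Ω) (ϑ : ℝ → ℝ) (θ : G → Ω → Ω) (lam mu : Ω → Measure M)
    (q : Ω → Measure (M × M)) : Prop :=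
  IsRandCoupling P lam mu q ∧ EquivRandCoupling θ q ∧
    meanCost G m P ϑ q = ceInftyCoup G m P ϑ θ lam mu

end GroupSetup

section Helpers

/-! ### Equivariant random measures and periodisation -/

open scoped ProbabilityTheory

/-- The diagonal action of a group element on pairs of points. -/
def diagAct {G M : Type*} [SMul G M] (g : G) (p : M × M) : M × M := (g • p.1, g • p.2)

lemma measurable_diagAct {G M : Type*} [SMul G M] [MeasurableSpace M] [MeasurableConstSMul G M]
    (g : G) : Measurable (diagAct g : M × M → M × M) :=
  (measurable_fst.const_smul g).prodMk (measurable_snd.const_smul g)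

/-- Stationarity as a change of variables: integrating over `A` equals integrating the shifted
integrand over the shifted set. -/
lemma setLIntegral_stationary {Ω G : Type*} [MeasurableSpace Ω] [Group G] {P : Measure Ω}
    {θ : G → Ω → Ω} (hθ : IsFlow θ) (hstat : Stationary θ P) (g : G) {A : Set Ω}
    (hA : MeasurableSet A) {f : Ω → ℝ≥0∞} (hf : Measurable f) :
    ∫⁻ ω in A, f ω ∂P = ∫⁻ ω in θ g ⁻¹' A, f (θ g ω) ∂P := by
  conv_lhs => rw [← hstat g]
  rw [setLIntegral_map hA hf (hθ.measurable g)]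

lemma IsFlow.apply_inv_apply {Ω G : Type*} [MeasurableSpace Ω] [Group G]
    {θ : G → Ω → Ω} (hθ : IsFlow θ) (g : G) (ω : Ω) : θ g⁻¹ (θ g ω) = ω := by
  have := congrFun (hθ.map_mul g⁻¹ g) ω
  simpa [hθ.map_one] using this

lemma IsFlow.apply_apply_inv {Ω G : Type*} [MeasurableSpace Ω] [Group G]
    {θ : G → Ω → Ω} (hθ : IsFlow θ) (g : G) (ω : Ω) : θ g (θ g⁻¹ ω) = ω := by
  have := congrFun (hθ.map_mul g g⁻¹) ω
  simpa [hθ.map_one] using this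

/-- The space-time form of equivariance: integrals of an equivariant random coupling are unchanged
when `g` acts simultaneously on `Ω` and on `M × M`. -/
lemma lintegral_equiv {Ω G M : Type*} [MeasurableSpace Ω] [Group G] [MeasurableSpace M]
    [MetricSpace M] [MulAction G M] [MeasurableConstSMul G M] {P : Measure Ω}
    {θ : G → Ω → Ω} (hθ : IsFlow θ) (hstat : Stationary θ P)
    {q : Ω → Measure (M × M)} (hq : Measurable q) (hqe : EquivRandCoupling θ q)
    (g : G) {A : Set Ω} (hA : MeasurableSet A) {f : M × M → ℝ≥0∞} (hf : Measurable f) :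
    ∫⁻ ω in A, ∫⁻ p, f p ∂(q ω) ∂P
      = ∫⁻ ω in θ g ⁻¹' A, ∫⁻ p, f (diagAct g p) ∂(q ω) ∂P := by
  rw [setLIntegral_stationary hθ hstat g hA (f := fun ω => ∫⁻ p, f p ∂(q ω))
    ((Measure.measurable_lintegral hf).comp hq)]
  refine lintegral_congr fun ω => ?_
  rw [hqe g ω]
  exact lintegral_map hf (measurable_diagAct g)

/-- The equivariant extension of a random measure `q₀` on `M × M` (thought of as carried by
`M × B₀`): the sum over `g` of the `g`-translates of `q₀` evaluated at `θ_{g⁻¹} ω`. -/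
noncomputable def periodize {Ω G M : Type*} [Group G] [MeasurableSpace M] [MulAction G M]
    (θ : G → Ω → Ω) (q₀ : Ω → Measure (M × M)) (ω : Ω) : Measure (M × M) :=
  Measure.sum fun g : G => (q₀ (θ g⁻¹ ω)).map (diagAct g)

section periodize

variable {Ω G M : Type*} [Group G] [MeasurableSpace M] [MulAction G M] [MeasurableConstSMul G M]
    {θ : G → Ω → Ω} {q₀ : Ω → Measure (M × M)}

lemma lintegral_periodize (ω : Ω) {f : M × M → ℝ≥0∞} (hf : Measurable f) :
    ∫⁻ p, f p ∂(periodize θ q₀ ω) = ∑' g : G, ∫⁻ p, f (diagAct g p) ∂(q₀ (θ g⁻¹ ω)) := by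
  rw [periodize, lintegral_sum_measure]
  exact tsum_congr fun g => lintegral_map hf (measurable_diagAct g)

lemma periodize_apply (ω : Ω) {s : Set (M × M)} (hs : MeasurableSet s) :
    periodize θ q₀ ω s = ∑' g : G, q₀ (θ g⁻¹ ω) (diagAct g ⁻¹' s) := by
  rw [periodize, Measure.sum_apply _ hs]
  exact tsum_congr fun g => Measure.map_apply (measurable_diagAct g) hs

variable [MeasurableSpace Ω] {P : Measure Ω}

lemma measurable_periodize [Countable G] (hθ : IsFlow θ) (hq : Measurable q₀) :
    Measurable (periodize θ q₀) := by
  refine Measure.measurable_of_measurable_coe _ fun s hs => ?_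
  simp_rw [periodize_apply _ hs]
  refine Measurable.tsum fun g => ?_
  exact (Measure.measurable_coe (measurable_diagAct g hs)).comp (hq.comp (hθ.measurable _))

lemma equiv_periodize {M : Type*} [MeasurableSpace M] [MetricSpace M] [MulAction G M]
    [MeasurableConstSMul G M] {q₀ : Ω → Measure (M × M)} (hθ : IsFlow θ) :
    EquivRandCoupling θ (periodize θ q₀) := by
  intro h ω
  ext s hs
  have hh := measurable_diagAct (M := M) h
  change _ = Measure.map (diagAct h) _ s
  rw [Measure.map_apply hh hs, periodize_apply _ hs, periodize_apply _ (hh hs),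
    ← (Equiv.mulLeft h).tsum_eq]
  refine tsum_congr fun g => ?_
  have h1 : θ (h * g)⁻¹ (θ h ω) = θ g⁻¹ ω := by
    have := congrFun (hθ.map_mul (h * g)⁻¹ h) ω
    simpa using this
  have h2 : diagAct (h * g) ⁻¹' s = diagAct g ⁻¹' (diagAct h ⁻¹' s : Set (M × M)) := by
    ext p; simp [diagAct, mul_smul]
  simp only [Equiv.coe_mulLeft, h1, h2]

lemma lintegral_lintegral_periodize [Countable G] (hθ : IsFlow θ) (hstat : Stationary θ P)
    (hq : Measurable q₀) {A : Set Ω} (hA : MeasurableSet A)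
    {f : M × M → ℝ≥0∞} (hf : Measurable f) :
    ∫⁻ ω in A, ∫⁻ p, f p ∂(periodize θ q₀ ω) ∂P
      = ∑' g : G, ∫⁻ ω in θ g ⁻¹' A, ∫⁻ p, f (diagAct g p) ∂(q₀ ω) ∂P := by
  simp_rw [lintegral_periodize _ hf]
  have hm (g : G) : Measurable fun ω => ∫⁻ p, f (diagAct g p) ∂(q₀ ω) :=
    (Measure.measurable_lintegral (hf.comp (measurable_diagAct g))).comp hq
  have hm' (g : G) : Measurable fun ω => ∫⁻ p, f (diagAct g p) ∂(q₀ (θ g⁻¹ ω)) :=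
    (hm g).comp (hθ.measurable _)
  rw [lintegral_tsum fun g => (hm' g).aemeasurable]
  refine tsum_congr fun g => ?_
  rw [setLIntegral_stationary hθ hstat g hA (hm' g)]
  simp [hθ.apply_inv_apply]

end periodize

/-! ### The mean cost of an equivariant coupling -/

lemma IsFundDom.isFundamentalDomain {G M : Type*} [Group G] [MetricSpace M] [MeasurableSpace M]
    [MulAction G M] {F : Set M} (hF : IsFundDom G F) (σ : Measure M) :
    IsFundamentalDomain G F σ := by
  refine IsFundamentalDomain.mk' hF.1.nullMeasurableSet fun x => ?_
  obtain ⟨g, hg, hu⟩ := hF.2 x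
  refine ⟨g⁻¹, Set.mem_smul_set_iff_inv_smul_mem.1 hg, fun y hy => ?_⟩
  rw [← hu y⁻¹ (by simpa [Set.mem_smul_set_iff_inv_smul_mem] using hy), inv_inv]

lemma IsFundDom.measure_biUnion {G M : Type*} [Group G] [Countable G] [MetricSpace M]
    [MeasurableSpace M] [MulAction G M] [MeasurableConstSMul G M]
    {F B₀ : Set M} (hF : IsFundDom G F) (hB₀ : IsFundDom G B₀)
    (σ : Measure M) [SMulInvariantMeasure G M σ] (I : Finset G) :
    σ (⋃ g ∈ I, g • F) = I.card * σ B₀ := by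
  rw [measure_biUnion_finset _ fun g _ => hF.1.const_smul g]
  · simp [measure_smul, (hF.isFundamentalDomain σ).measure_eq (hB₀.isFundamentalDomain σ)]
  · intro g _ h _ hgh
    refine Set.disjoint_left.2 fun x hx hx' => hgh ((hF.2 x).unique hx hx')

lemma measurable_costFn {M : Type*} [MetricSpace M] [MeasurableSpace M] [BorelSpace M]
    [SecondCountableTopology M] {ϑ : ℝ → ℝ} (hϑ : IsScaleFn ϑ) :
    Measurable (costFn ϑ : M × M → ℝ≥0∞) :=
  (hϑ.continuous.comp continuous_dist).measurable.ennreal_ofReal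

/-- For an equivariant coupling, the normalised cost of transport into an admissible set does not
depend on the set: `D ↦ 𝔼 ∫_{M × D} c dq` is a `G`-invariant measure, hence gives all fundamental
domains the same mass. -/
lemma meanCost_eq {Ω G M : Type*} [MeasurableSpace Ω] [Group G] [Countable G] [MeasurableSpace M]
    [MetricSpace M] [BorelSpace M] [SecondCountableTopology M] [MulAction G M]
    (hiso : ∀ g : G, Isometry (fun x : M => g • x))
    {m : Measure M} (hmp : ∀ g : G, MeasurePreserving (fun x : M => g • x) m m)
    {B₀ : Set M} (hB₀ : IsFundDom G B₀) (hB₀vol : m B₀ = 1)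
    {ϑ : ℝ → ℝ} (hϑ : IsScaleFn ϑ) {P : Measure Ω}
    {θ : G → Ω → Ω} (hθ : IsFlow θ) (hstat : Stationary θ P)
    {q : Ω → Measure (M × M)} (hq : Measurable q) (hqe : EquivRandCoupling θ q) :
    meanCost G m P ϑ q = ∫⁻ ω, ∫⁻ p in Set.univ ×ˢ B₀, costFn ϑ p ∂(q ω) ∂P := by
  have : MeasurableConstSMul G M := ⟨fun g => (hiso g).continuous.measurable⟩
  have : SMulInvariantMeasure G M m := ⟨fun g s hs => (hmp g).measure_preimage hs.nullMeasurableSet⟩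
  have hc : Measurable (costFn ϑ : M × M → ℝ≥0∞) := measurable_costFn hϑ
  set σ : Measure M := P.bind fun ω => ((q ω).withDensity (costFn ϑ)).map Prod.snd with hσdef
  have happ (ω : Ω) {D : Set M} (hD : MeasurableSet D) :
      ((q ω).withDensity (costFn ϑ)).map Prod.snd D
        = ∫⁻ p in Set.univ ×ˢ D, costFn ϑ p ∂(q ω) := by
    rw [Measure.map_apply measurable_snd hD, withDensity_apply _ (measurable_snd hD),
      Set.univ_prod]
  have hmeas (D : Set M) (hD : MeasurableSet D) :
      Measurable fun ω => ∫⁻ p in Set.univ ×ˢ D, costFn ϑ p ∂(q ω) := by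
    simp_rw [← lintegral_indicator (MeasurableSet.univ.prod hD)]
    exact (Measure.measurable_lintegral (hc.indicator (MeasurableSet.univ.prod hD))).comp hq
  have hσ {D : Set M} (hD : MeasurableSet D) :
      σ D = ∫⁻ ω, ∫⁻ p in Set.univ ×ˢ D, costFn ϑ p ∂(q ω) ∂P := by
    rw [hσdef, Measure.bind_apply hD]
    · exact lintegral_congr fun ω => happ ω hD
    · refine (Measure.measurable_of_measurable_coe _ fun s hs => ?_).aemeasurable
      simp_rw [happ _ hs]
      exact hmeas s hs
  have : SMulInvariantMeasure G M σ := by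
    refine ⟨fun g s hs => ?_⟩
    have hs' : MeasurableSet ((fun x : M => g • x) ⁻¹' s) := measurable_const_smul g hs
    rw [hσ hs, hσ hs']
    simp_rw [← lintegral_indicator (MeasurableSet.univ.prod hs),
      ← lintegral_indicator (MeasurableSet.univ.prod hs')]
    have := lintegral_equiv hθ hstat hq hqe g MeasurableSet.univ
      (hc.indicator (MeasurableSet.univ.prod hs))
    simp only [Set.preimage_univ, Measure.restrict_univ] at this
    rw [this]
    refine lintegral_congr fun ω => lintegral_congr fun p => ?_
    have h1 : costFn ϑ (diagAct g p) = costFn ϑ p := by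
      simp only [costFn, diagAct, (hiso g).dist_eq]
    simp only [Set.indicator, h1]
    congr 1
  rw [← hσ hB₀.1, meanCost]
  have key {B : Set M} (hB : Adm G B) :
      (m B)⁻¹ * ∫⁻ ω, ∫⁻ p in Set.univ ×ˢ B, costFn ϑ p ∂(q ω) ∂P = σ B₀ := by
    obtain ⟨F, I, hF, hI, hne, rfl⟩ := hB
    lift I to Finset G using hI
    have hcard : I.card ≠ 0 := Finset.card_ne_zero.2 (by simpa using hne)
    simp only [Finset.mem_coe]
    rw [← hσ (Finset.measurableSet_biUnion I fun g _ => hF.1.const_smul g)]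
    rw [hF.measure_biUnion hB₀ m, hF.measure_biUnion hB₀ σ, hB₀vol, mul_one, ← mul_assoc,
      ENNReal.inv_mul_cancel (by exact_mod_cast hcard) (by simp), one_mul]
  refine le_antisymm (iSup₂_le fun B hB => (key hB).le) ?_
  have hAdm : Adm G B₀ := ⟨B₀, {1}, hB₀, Set.finite_singleton _, Set.singleton_nonempty _, by simp⟩
  rw [← key hAdm]
  exact le_iSup₂ (f := fun B (_ : B ∈ {B : Set M | Adm G B}) =>
    (m B)⁻¹ * ∫⁻ ω, ∫⁻ p in Set.univ ×ˢ B, costFn ϑ p ∂(q ω) ∂P) B₀ hAdm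

/-! ### Lifting random measures to measures on the product with `Ω` -/

/-- The sub-Markov kernel obtained by normalising a random measure `r`; where `r ω` has mass `0` or
`∞` the conventions `0⁻¹ * 0 = 0` and `∞⁻¹ * ∞ = 0` still give total mass at most one. -/
noncomputable def normKernel {Ω E : Type*} [MeasurableSpace Ω] [MeasurableSpace E]
    (r : Ω → Measure E) (hr : Measurable r) : ProbabilityTheory.Kernel Ω E where
  toFun ω := (r ω Set.univ)⁻¹ • r ω
  measurable' := by
    refine Measure.measurable_of_measurable_coe _ fun s hs => ?_
    simp only [Measure.smul_apply, smul_eq_mul]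
    exact ((Measure.measurable_coe MeasurableSet.univ).comp hr).inv.mul
      ((Measure.measurable_coe hs).comp hr)

instance isFiniteKernel_normKernel {Ω E : Type*} [MeasurableSpace Ω] [MeasurableSpace E]
    (r : Ω → Measure E) (hr : Measurable r) :
    ProbabilityTheory.IsFiniteKernel (normKernel r hr) :=
  ⟨1, ENNReal.one_lt_top, fun ω => by
    change ((r ω Set.univ)⁻¹ • r ω) Set.univ ≤ 1
    simp [ENNReal.inv_mul_le_one]⟩

lemma eq_smul_normKernel {Ω E : Type*} [MeasurableSpace Ω] [MeasurableSpace E]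
    {r : Ω → Measure E} (hr : Measurable r) {ω : Ω} (h : r ω Set.univ ≠ ∞) :
    r ω = r ω Set.univ • normKernel r hr ω := by
  change r ω = r ω Set.univ • ((r ω Set.univ)⁻¹ • r ω)
  by_cases h0 : r ω Set.univ = 0
  · rw [Measure.measure_univ_eq_zero.1 h0]; simp
  · rw [smul_smul, ENNReal.mul_inv_cancel h0 h, one_smul]

lemma lintegral_compProd_withDensity {Ω E : Type*} [MeasurableSpace Ω] [MeasurableSpace E]
    {P : Measure Ω} [SFinite P] {κ : ProbabilityTheory.Kernel Ω E}
    [ProbabilityTheory.IsFiniteKernel κ] {h : Ω → ℝ≥0∞} (hh : Measurable h) (c : ℝ≥0∞)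
    {r : Ω → Measure E} (hr : ∀ᵐ ω ∂P, r ω = h ω • κ ω)
    {F : Ω × E → ℝ≥0∞} (hF : Measurable F) :
    ∫⁻ z, F z ∂((P.withDensity fun ω => c * h ω) ⊗ₘ κ)
      = c * ∫⁻ ω, ∫⁻ p, F (ω, p) ∂(r ω) ∂P := by
  have hm : Measurable fun ω => ∫⁻ p, F (ω, p) ∂(κ ω) := hF.lintegral_kernel_prod_right'
  rw [Measure.lintegral_compProd hF,
    lintegral_withDensity_eq_lintegral_mul _ (hh.const_mul c) hm]
  simp only [Pi.mul_apply, mul_assoc]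
  have hm' : Measurable fun ω => h ω * ∫⁻ p, F (ω, p) ∂(κ ω) := hh.mul hm
  rw [lintegral_const_mul _ hm']
  congr 1
  refine lintegral_congr_ae ?_
  filter_upwards [hr] with ω hω
  rw [hω, lintegral_smul_measure, smul_eq_mul]

lemma compProd_withDensity_prod {Ω E : Type*} [MeasurableSpace Ω] [MeasurableSpace E]
    {P : Measure Ω} [SFinite P] {κ : ProbabilityTheory.Kernel Ω E}
    [ProbabilityTheory.IsFiniteKernel κ] {h : Ω → ℝ≥0∞} (hh : Measurable h) (c : ℝ≥0∞)
    {r : Ω → Measure E} (hr : ∀ᵐ ω ∂P, r ω = h ω • κ ω)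
    {A : Set Ω} (hA : MeasurableSet A) {T : Set E} (hT : MeasurableSet T) :
    ((P.withDensity fun ω => c * h ω) ⊗ₘ κ) (A ×ˢ T) = c * ∫⁻ ω in A, r ω T ∂P := by
  rw [← lintegral_indicator_one (hA.prod hT), lintegral_compProd_withDensity hh c hr
    (measurable_one.indicator (hA.prod hT)), ← lintegral_indicator hA]
  congr 1
  refine lintegral_congr fun ω => ?_
  by_cases hω : ω ∈ A
  · rw [Set.indicator_of_mem hω, ← lintegral_indicator_one hT]
    refine lintegral_congr fun p => ?_
    by_cases hp : p ∈ T
    · rw [Set.indicator_of_mem hp, Set.indicator_of_mem (Set.mk_mem_prod hω hp)]; rfl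
    · rw [Set.indicator_of_notMem hp, Set.indicator_of_notMem fun hh => hp hh.2]
  · simp [Set.indicator, hω]

/-! ### Weak limits with a fixed marginal on `Ω` -/

lemma tsum_liminf_le {ι : Type*} (a : ℕ → ι → ℝ≥0∞) :
    ∑' i, atTop.liminf (fun n => a n i) ≤ atTop.liminf fun n => ∑' i, a n i := by
  let _ : MeasurableSpace ι := ⊤
  simp_rw [← lintegral_count]
  exact lintegral_liminf_le fun n => measurable_from_top

/-- When all measures share their marginal on `Ω`, the portmanteau inequality for open sets extends
to sets `A ×ˢ V` with `V` open and `A` merely measurable, by outer regularity of the marginal. -/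
lemma le_liminf_prod_open {Ω E : Type*} [MetricSpace Ω] [CompactSpace Ω] [MeasurableSpace Ω]
    [BorelSpace Ω] [MetricSpace E] [SecondCountableTopology E] [MeasurableSpace E] [BorelSpace E]
    {Qs : ℕ → ProbabilityMeasure (Ω × E)} {Q : ProbabilityMeasure (Ω × E)}
    (hQ : Tendsto Qs atTop (𝓝 Q)) {ν : Measure Ω} [IsFiniteMeasure ν]
    (hν : ∀ n, (Qs n : Measure (Ω × E)).fst = ν) {A : Set Ω} (hA : MeasurableSet A)
    {V : Set E} (hV : IsOpen V) :
    (Q : Measure (Ω × E)) (A ×ˢ V) ≤ atTop.liminf fun n => (Qs n : Measure (Ω × E)) (A ×ˢ V) := by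
  refine ENNReal.le_of_forall_pos_le_add fun ε hε _ => ?_
  obtain ⟨U, hAU, hU, -, hUA⟩ := hA.exists_isOpen_sdiff_lt (measure_ne_top ν A)
    (ENNReal.coe_ne_zero.2 hε.ne')
  have h1 (n : ℕ) : (Qs n : Measure (Ω × E)) (U ×ˢ V)
      ≤ (Qs n : Measure (Ω × E)) (A ×ˢ V) + ε := by
    calc (Qs n : Measure (Ω × E)) (U ×ˢ V)
        ≤ (Qs n : Measure (Ω × E)) (A ×ˢ V ∪ Prod.fst ⁻¹' (U \ A)) := by
          refine measure_mono ?_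
          rintro ⟨ω, p⟩ ⟨h1, h2⟩
          by_cases h : ω ∈ A
          · exact Or.inl ⟨h, h2⟩
          · exact Or.inr ⟨h1, h⟩
      _ ≤ _ := measure_union_le _ _
      _ ≤ _ := by
          gcongr
          rw [← Measure.fst_apply (hU.measurableSet.diff hA), hν n]
          exact hUA.le
  calc (Q : Measure (Ω × E)) (A ×ˢ V) ≤ (Q : Measure (Ω × E)) (U ×ˢ V) :=
        measure_mono (Set.prod_mono hAU subset_rfl)
    _ ≤ atTop.liminf fun n => (Qs n : Measure (Ω × E)) (U ×ˢ V) :=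
        ProbabilityMeasure.le_liminf_measure_open_of_tendsto hQ (hU.prod hV)
    _ ≤ atTop.liminf fun n => ((Qs n : Measure (Ω × E)) (A ×ˢ V) + ε) :=
        liminf_le_liminf (Eventually.of_forall h1)
    _ = (atTop.liminf fun n => (Qs n : Measure (Ω × E)) (A ×ˢ V)) + ε :=
        liminf_add_const atTop _ _ (by isBoundedDefault) (by isBoundedDefault)

/-- Bounded transport cost together with a fixed target marginal gives relative compactness: the
target is confined to a compact set up to small mass, and by Markov's inequality the source is
within a bounded distance of the target up to small mass. -/
lemma exists_subseq_tendsto {Ω M : Type*} [MetricSpace Ω] [CompactSpace Ω] [MeasurableSpace Ω]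
    [BorelSpace Ω] [MetricSpace M] [ProperSpace M] [SecondCountableTopology M] [MeasurableSpace M]
    [BorelSpace M] {ϑ : ℝ → ℝ} (hϑ : IsScaleFn ϑ)
    (Qs : ℕ → ProbabilityMeasure (Ω × (M × M))) (N : Measure M) [IsFiniteMeasure N]
    (hN : ∀ n, (Qs n : Measure (Ω × (M × M))).map (fun z => z.2.2) = N)
    {C : ℝ≥0∞} (hC : C ≠ ∞) (hQC : ∀ n, ∫⁻ z, costFn ϑ z.2 ∂(Qs n : Measure (Ω × (M × M))) ≤ C) :
    ∃ (Q : ProbabilityMeasure (Ω × (M × M))) (φ : ℕ → ℕ), StrictMono φ ∧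
      Tendsto (Qs ∘ φ) atTop (𝓝 Q) := by
  have htight : IsTightMeasureSet
      {((μ : ProbabilityMeasure (Ω × (M × M))) : Measure (Ω × (M × M))) | μ ∈ Set.range Qs} := by
    rw [isTightMeasureSet_iff_exists_isCompact_measure_compl_le]
    intro ε hε
    have hε2 : 0 < ε / 2 := ENNReal.half_pos hε.ne'
    obtain ⟨K, hK, hNK⟩ := isTightMeasureSet_iff_exists_isCompact_measure_compl_le.1
      (isTightMeasureSet_singleton (μ := N)) (ε / 2) hε2
    have hlim : Tendsto (fun r => ENNReal.ofReal (ϑ r)) atTop (𝓝 ∞) :=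
      ENNReal.tendsto_ofReal_atTop.comp hϑ.tendsto_atTop
    have hfin : C / (ε / 2) < ∞ := ENNReal.div_lt_top hC hε2.ne'
    obtain ⟨r, hr, hr0⟩ := ((hlim.eventually (lt_mem_nhds hfin)).and (eventually_ge_atTop 0)).exists
    refine ⟨Set.univ ×ˢ (Metric.cthickening r K ×ˢ K), isCompact_univ.prod (hK.cthickening.prod hK),
      ?_⟩
    rintro _ ⟨_, ⟨n, rfl⟩, rfl⟩
    have hm : Measurable fun z : Ω × (M × M) => costFn ϑ z.2 :=
      (measurable_costFn hϑ).comp measurable_snd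
    have hsub : (Set.univ ×ˢ (Metric.cthickening r K ×ˢ K) : Set (Ω × (M × M)))ᶜ
        ⊆ (fun z => z.2.2) ⁻¹' Kᶜ ∪ {z | ENNReal.ofReal (ϑ r) ≤ costFn ϑ z.2} := by
      rintro ⟨ω, x, y⟩ hz
      by_cases hy : y ∈ K
      · right
        have hx : x ∉ Metric.cthickening r K := fun hx => hz ⟨trivial, hx, hy⟩
        have hd : r < dist x y := by
          by_contra! hd
          exact hx (Metric.mem_cthickening_of_dist_le x y r K hy hd)
        exact ENNReal.ofReal_le_ofReal
          (hϑ.strictMono.monotoneOn hr0 (hr0.trans hd.le) hd.le)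
      · exact Or.inl hy
    calc _ ≤ _ := measure_mono hsub
      _ ≤ _ := measure_union_le _ _
      _ ≤ ε / 2 + ε / 2 := by
        gcongr
        · rw [← Measure.map_apply (by fun_prop) hK.measurableSet.compl, hN n]
          exact hNK N rfl
        · have hr1 : ENNReal.ofReal (ϑ r) ≠ 0 := (zero_le.trans_lt hr).ne'
          refine (meas_ge_le_lintegral_div hm.aemeasurable hr1 ENNReal.ofReal_ne_top).trans ?_
          refine (ENNReal.div_le_div_right (hQC n) _).trans ?_
          exact ENNReal.div_le_of_le_mul (mul_comm (ε / 2) _ ▸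
            (ENNReal.div_le_iff_le_mul (Or.inl hε2.ne') (Or.inr hr1)).1 hr.le)
      _ = ε := ENNReal.add_halves ε
  have hcomp := isCompact_closure_of_isTightMeasureSet htight
  obtain ⟨Q, -, φ, hφ, hQ⟩ := hcomp.tendsto_subseq
    (x := Qs) fun n => subset_closure ⟨n, rfl⟩
  exact ⟨Q, φ, hφ, hQ⟩

/-! ### Almost sure comparison of random measures -/

lemma ae_isLocallyFiniteMeasure {Ω M : Type*} [MeasurableSpace Ω] [MetricSpace M] [ProperSpace M]
    [MeasurableSpace M] [BorelSpace M] (o : M) {m : Measure M} [IsLocallyFiniteMeasure m]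
    {P : Measure Ω} {lam : Ω → Measure M} (hlam : Measurable lam)
    (hint : HasIntensity m P lam 1) : ∀ᵐ ω ∂P, IsLocallyFiniteMeasure (lam ω) := by
  have h (n : ℕ) : ∀ᵐ ω ∂P, lam ω (Metric.closedBall o n) < ∞ := by
    have hB : MeasurableSet (Metric.closedBall o (n : ℝ)) := Metric.isClosed_closedBall.measurableSet
    refine ae_lt_top ((Measure.measurable_coe hB).comp hlam) ?_
    have := hint _ hB
    change ∫⁻ ω, lam ω _ ∂P ≠ ∞
    rw [this, one_mul]
    exact (isCompact_closedBall o _).measure_lt_top.ne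
  filter_upwards [ae_all_iff.2 h] with ω hω
  refine ⟨fun x => ?_⟩
  obtain ⟨n, hn⟩ := exists_nat_gt (dist x o)
  exact ⟨_, Metric.closedBall_mem_nhds_of_mem (Metric.mem_ball.2 hn), hω n⟩

/-- A random measure dominated by `lam` on open sets in integrated form is almost surely dominated
by `lam`: the exceptional null set is chosen for the finite unions of basic open sets, which
exhaust all open sets, and outer regularity of `lam ω` takes care of the remaining Borel sets. -/
lemma ae_le_of_open {Ω M : Type*} [MeasurableSpace Ω] [MetricSpace M] [SecondCountableTopology M]
    [MeasurableSpace M] [BorelSpace M] {P : Measure Ω} [IsFiniteMeasure P] {ρ lam : Ω → Measure M}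
    (hρ : Measurable ρ) (hlf : ∀ᵐ ω ∂P, IsLocallyFiniteMeasure (lam ω))
    (h : ∀ U : Set M, IsOpen U → ∀ A : Set Ω, MeasurableSet A →
      ∫⁻ ω in A, ρ ω U ∂P ≤ ∫⁻ ω in A, lam ω U ∂P) :
    ∀ᵐ ω ∂P, ρ ω ≤ lam ω := by
  have hcount : {t : Set (Set M) | t.Finite ∧ t ⊆ TopologicalSpace.countableBasis M}.Countable :=
    Set.countable_ofPred_finite_subset (TopologicalSpace.countable_countableBasis M)
  have hae : ∀ᵐ ω ∂P, ∀ t ∈ {t : Set (Set M) | t.Finite ∧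
      t ⊆ TopologicalSpace.countableBasis M}, ρ ω (⋃₀ t) ≤ lam ω (⋃₀ t) := by
    rw [ae_ball_iff hcount]
    intro t ht
    have hopen : IsOpen (⋃₀ t) := isOpen_sUnion fun u hu =>
      TopologicalSpace.isOpen_of_mem_countableBasis (ht.2 hu)
    exact ae_le_of_forall_setLIntegral_le_of_sigmaFinite
      ((Measure.measurable_coe hopen.measurableSet).comp hρ) fun A hA _ => h _ hopen A hA
  filter_upwards [hae, hlf] with ω hω hlfω
  have hU (U : Set M) (hU : IsOpen U) : ρ ω U ≤ lam ω U := by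
    obtain ⟨T, hT, rfl⟩ :=
      (TopologicalSpace.isBasis_countableBasis M).open_eq_sUnion hU
    rcases T.eq_empty_or_nonempty with rfl | hne
    · simp
    obtain ⟨f, rfl⟩ :=
      ((TopologicalSpace.countable_countableBasis M).mono hT).exists_eq_range hne
    rw [Set.sUnion_range]
    refine le_of_tendsto_of_tendsto' (tendsto_measure_iUnion_accumulate (f := f))
      (tendsto_measure_iUnion_accumulate (f := f)) fun n => ?_
    have hacc : Set.accumulate f n = ⋃₀ (f '' Set.Iic n) := by
      simp [Set.accumulate_def, Set.sUnion_image]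
    rw [hacc]
    exact hω _ ⟨(Set.finite_Iic n).image f, (Set.image_subset_range f _).trans hT⟩
  refine Measure.le_iff.2 fun s _ => ?_
  rw [s.measure_eq_iInf_isOpen (lam ω)]
  exact le_iInf₂ fun U hsU => le_iInf fun hUo => (measure_mono hsU).trans (hU U hUo)

/-! ### Couplings and their parts over a fundamental domain -/

/-- An equivariant random coupling is recovered from its part with target in a fundamental
domain. -/
lemma periodize_restrict {Ω G M : Type*} [Group G] [Countable G] [MetricSpace M]
    [MeasurableSpace M] [MulAction G M] [MeasurableConstSMul G M]
    {θ : G → Ω → Ω} {B₀ : Set M} (hB₀ : IsFundDom G B₀)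
    {q : Ω → Measure (M × M)} (hqe : EquivRandCoupling θ q) (ω : Ω) :
    periodize θ (fun ω => (q ω).restrict (Set.univ ×ˢ B₀)) ω = q ω := by
  ext s hs
  rw [periodize_apply _ hs]
  have h1 (g : G) : ((q (θ g⁻¹ ω)).restrict (Set.univ ×ˢ B₀)) (diagAct g ⁻¹' s)
      = q ω (s ∩ Set.univ ×ˢ (g • B₀)) := by
    rw [Measure.restrict_apply (measurable_diagAct g hs), hqe g⁻¹ ω]
    change (Measure.map (diagAct g⁻¹) (q ω)) _ = _
    rw [Measure.map_apply (measurable_diagAct _)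
      ((measurable_diagAct g hs).inter (MeasurableSet.univ.prod hB₀.1))]
    congr 1
    ext p
    simp [diagAct, Set.mem_smul_set_iff_inv_smul_mem]
  simp_rw [h1]
  rw [← measure_iUnion]
  · congr 1
    ext p
    obtain ⟨g, hg, -⟩ := hB₀.2 p.2
    simpa using fun _ => ⟨g, hg⟩
  · intro g h hgh
    refine Set.disjoint_left.2 fun p hp hp' => hgh ((hB₀.2 p.2).unique hp.2.2 hp'.2.2)
  · exact fun g => hs.inter (MeasurableSet.univ.prod (hB₀.1.const_smul g))

/-- The expected cost of transport into `B₀` under the periodisation of `q₀` is the expected total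
cost of `q₀`. -/
lemma cost_periodize {Ω G M : Type*} [MeasurableSpace Ω] [Group G] [Countable G]
    [MeasurableSpace M] [MetricSpace M] [BorelSpace M] [SecondCountableTopology M] [MulAction G M]
    [MeasurableConstSMul G M] (hiso : ∀ g : G, Isometry (fun x : M => g • x))
    {B₀ : Set M} (hB₀ : IsFundDom G B₀) {ϑ : ℝ → ℝ} (hϑ : IsScaleFn ϑ) {P : Measure Ω}
    {θ : G → Ω → Ω} (hθ : IsFlow θ) (hstat : Stationary θ P)
    {q₀ : Ω → Measure (M × M)} (hq : Measurable q₀) :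
    ∫⁻ ω, ∫⁻ p in Set.univ ×ˢ B₀, costFn ϑ p ∂(periodize θ q₀ ω) ∂P
      = ∫⁻ ω, ∫⁻ p, costFn ϑ p ∂(q₀ ω) ∂P := by
  have hS : MeasurableSet (Set.univ ×ˢ B₀ : Set (M × M)) := MeasurableSet.univ.prod hB₀.1
  have hf : Measurable ((Set.univ ×ˢ B₀ : Set (M × M)).indicator (costFn ϑ)) :=
    (measurable_costFn hϑ).indicator hS
  have hfg (g : G) : Measurable fun p : M × M =>
      (Set.univ ×ˢ B₀ : Set (M × M)).indicator (costFn ϑ) (diagAct g p) :=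
    hf.comp (measurable_diagAct g)
  simp_rw [← lintegral_indicator hS]
  have := lintegral_lintegral_periodize (P := P) hθ hstat hq MeasurableSet.univ hf
  simp only [Set.preimage_univ, Measure.restrict_univ] at this
  have hm (g : G) : Measurable fun ω => ∫⁻ p,
      (Set.univ ×ˢ B₀ : Set (M × M)).indicator (costFn ϑ) (diagAct g p) ∂(q₀ ω) :=
    (Measure.measurable_lintegral (hfg g)).comp hq
  rw [this, ← lintegral_tsum fun g => (hm g).aemeasurable]
  refine lintegral_congr fun ω => ?_
  rw [← lintegral_tsum fun g => (hfg g).aemeasurable]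
  refine lintegral_congr fun p => ?_
  obtain ⟨g, hg, hu⟩ := hB₀.2 p.2
  rw [tsum_eq_single g⁻¹]
  · rw [Set.indicator_of_mem]
    · simp only [costFn, diagAct, (hiso g⁻¹).dist_eq]
    · exact ⟨trivial, Set.mem_smul_set_iff_inv_smul_mem.1 hg⟩
  · intro h hne
    refine Set.indicator_of_notMem (fun hh => hne ?_) _
    rw [← hu h⁻¹ (by simpa [Set.mem_smul_set_iff_inv_smul_mem, diagAct] using hh.2),
      inv_inv]

/-- If the part `q₀` has second marginal `mu` restricted to `B₀`, its periodisation has second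
marginal `mu`. -/
lemma ae_snd_periodize {Ω G M : Type*} [MeasurableSpace Ω] [Group G] [Countable G]
    [MeasurableSpace M] [MetricSpace M] [MulAction G M] [MeasurableConstSMul G M]
    {B₀ : Set M} (hB₀ : IsFundDom G B₀) {P : Measure Ω}
    {θ : G → Ω → Ω} (hθ : IsFlow θ) (hstat : Stationary θ P)
    {mu : Ω → Measure M} (hmueq : EquivRandMeasure θ mu) {q₀ : Ω → Measure (M × M)}
    (h : ∀ᵐ ω ∂P, (q₀ ω).snd = (mu ω).restrict B₀) :
    ∀ᵐ ω ∂P, (periodize θ q₀ ω).snd = mu ω := by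
  have h' : ∀ᵐ ω ∂P, ∀ g : G, (q₀ (θ g⁻¹ ω)).snd = (mu (θ g⁻¹ ω)).restrict B₀ := by
    refine ae_all_iff.2 fun g => ?_
    rw [← hstat g⁻¹] at h
    exact ae_of_ae_map (hθ.measurable _).aemeasurable h
  filter_upwards [h'] with ω hω
  ext D hD
  rw [Measure.snd_apply hD, periodize_apply _ (measurable_snd hD)]
  have h1 (g : G) : q₀ (θ g⁻¹ ω) (diagAct g ⁻¹' (Prod.snd ⁻¹' D)) = mu ω (D ∩ g • B₀) := by
    have hD' : MeasurableSet ((fun x : M => g • x) ⁻¹' D) := measurable_const_smul g hD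
    change q₀ (θ g⁻¹ ω) (Prod.snd ⁻¹' ((fun x : M => g • x) ⁻¹' D)) = _
    rw [← Measure.snd_apply hD', hω g, Measure.restrict_apply hD', hmueq,
      Measure.map_apply (measurable_const_smul _) (hD'.inter hB₀.1)]
    congr 1
    ext x
    simp [Set.mem_smul_set_iff_inv_smul_mem]
  simp_rw [h1]
  rw [← measure_iUnion]
  · congr 1
    ext x
    obtain ⟨g, hg, -⟩ := hB₀.2 x
    simpa using fun _ => ⟨g, hg⟩
  · intro g h hgh
    exact Set.disjoint_left.2 fun x hx hx' => hgh ((hB₀.2 x).unique hx.2 hx'.2)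
  · exact fun g => hD.inter (hB₀.1.const_smul g)

/-! ### Limits of random transport plans -/

/-- Sequential compactness and lower semicontinuity for random transport plans with common target
random measure `mu` restricted to `B₀` and bounded expected cost. The plans are lifted to
probability measures on `Ω × (M × M)`, a weak limit is extracted there and disintegrated again
over `Ω`. -/
lemma exists_limit_plan {Ω M : Type*} [MetricSpace Ω] [CompactSpace Ω] [MeasurableSpace Ω]
    [BorelSpace Ω] [MetricSpace M] [ProperSpace M] [SecondCountableTopology M] [MeasurableSpace M]
    [BorelSpace M] [Nonempty M] {ϑ : ℝ → ℝ} (hϑ : IsScaleFn ϑ) {P : Measure Ω}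
    [IsProbabilityMeasure P] {mu : Ω → Measure M} (hmu : Measurable mu) {B₀ : Set M}
    (hB₀ : MeasurableSet B₀) {β : ℝ≥0∞} (hβ0 : β ≠ 0) (hβ : β ≠ ∞)
    (hint : ∫⁻ ω, mu ω B₀ ∂P = β) {r : ℕ → Ω → Measure (M × M)} (hr : ∀ n, Measurable (r n))
    (hsnd : ∀ n, ∀ᵐ ω ∂P, (r n ω).snd = (mu ω).restrict B₀) {C : ℝ≥0∞} (hC : C ≠ ∞)
    (hcost : ∀ n, ∫⁻ ω, ∫⁻ p, costFn ϑ p ∂(r n ω) ∂P ≤ C) :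
    ∃ (q₀ : Ω → Measure (M × M)) (φ : ℕ → ℕ), StrictMono φ ∧ Measurable q₀ ∧
      (∀ᵐ ω ∂P, (q₀ ω).snd = (mu ω).restrict B₀) ∧
      (∀ A : Set Ω, MeasurableSet A → ∀ V : Set (M × M), IsOpen V →
        ∫⁻ ω in A, q₀ ω V ∂P ≤ atTop.liminf fun n => ∫⁻ ω in A, r (φ n) ω V ∂P) ∧
      ∫⁻ ω, ∫⁻ p, costFn ϑ p ∂(q₀ ω) ∂P
        ≤ atTop.liminf fun n => ∫⁻ ω, ∫⁻ p, costFn ϑ p ∂(r (φ n) ω) ∂P := by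
  set h : Ω → ℝ≥0∞ := fun ω => mu ω B₀ with hdef
  have hh : Measurable h := (Measure.measurable_coe hB₀).comp hmu
  have hβi0 : β⁻¹ ≠ 0 := ENNReal.inv_ne_zero.2 hβ
  have hβit : β⁻¹ ≠ ∞ := ENNReal.inv_ne_top.2 hβ0
  have hfin : ∀ᵐ ω ∂P, h ω < ∞ := ae_lt_top hh (by rw [hint]; exact hβ)
  set κ : ℕ → ProbabilityTheory.Kernel Ω (M × M) := fun n => normKernel (r n) (hr n)
  have hκ (n : ℕ) : ProbabilityTheory.IsFiniteKernel (κ n) :=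
    isFiniteKernel_normKernel (r n) (hr n)
  have hrκ (n : ℕ) : ∀ᵐ ω ∂P, r n ω = h ω • κ n ω := by
    filter_upwards [hfin, hsnd n] with ω h1 h2
    have h3 : r n ω Set.univ = h ω := by
      rw [← Measure.snd_univ, h2, Measure.restrict_apply_univ]
    rw [← h3]
    exact eq_smul_normKernel (hr n) (by rw [h3]; exact h1.ne)
  have hrκ' (n : ℕ) (D : Set M) (hD : MeasurableSet D) :
      ∀ᵐ ω ∂P, r n ω (Prod.snd ⁻¹' D) = mu ω (D ∩ B₀) := by
    filter_upwards [hsnd n] with ω h2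
    rw [← Measure.snd_apply hD, h2, Measure.restrict_apply hD]
  set ν : Measure Ω := P.withDensity fun ω => β⁻¹ * h ω with hν
  have hνuniv : ν Set.univ = 1 := by
    rw [hν, withDensity_apply _ MeasurableSet.univ, Measure.restrict_univ,
      lintegral_const_mul _ hh, hint, ENNReal.inv_mul_cancel hβ0 hβ]
  have hνp : IsProbabilityMeasure ν := ⟨hνuniv⟩
  have hrect (n : ℕ) {A : Set Ω} (hA : MeasurableSet A) {D : Set M} (hD : MeasurableSet D) :
      (ν ⊗ₘ κ n) (A ×ˢ (Prod.snd ⁻¹' D)) = β⁻¹ * ∫⁻ ω in A, mu ω (D ∩ B₀) ∂P := by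
    rw [hν, compProd_withDensity_prod hh β⁻¹ (hrκ n) hA (measurable_snd hD)]
    congr 1
    exact lintegral_congr_ae (ae_restrict_of_ae (hrκ' n D hD))
  have hfst (n : ℕ) : (ν ⊗ₘ κ n).fst = ν := by
    ext A hA
    have := hrect n hA MeasurableSet.univ
    rw [Set.preimage_univ, Set.prod_univ] at this
    rw [Measure.fst_apply hA, this, hν, withDensity_apply _ hA, lintegral_const_mul _ hh]
    simp [hdef]
  have hprob (n : ℕ) : IsProbabilityMeasure (ν ⊗ₘ κ n) :=
    ⟨by rw [← Measure.fst_univ, hfst n, hνuniv]⟩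
  -- the joint law of the environment and the target does not depend on the plan
  set R : Measure (Ω × M) := (ν ⊗ₘ κ 0).map (Prod.map id Prod.snd) with hR
  have hmeasS : Measurable (Prod.map id Prod.snd : Ω × (M × M) → Ω × M) :=
    measurable_id.prodMap measurable_snd
  have hRp : IsProbabilityMeasure R := Measure.isProbabilityMeasure_map hmeasS.aemeasurable
  have hRn (n : ℕ) : (ν ⊗ₘ κ n).map (Prod.map id Prod.snd) = R := by
    have hp := Measure.isProbabilityMeasure_map (μ := ν ⊗ₘ κ n) hmeasS.aemeasurable
    refine Measure.ext_prod fun {A D} hA hD => ?_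
    rw [hR, Measure.map_apply hmeasS (hA.prod hD), Measure.map_apply hmeasS (hA.prod hD)]
    have : (Prod.map id Prod.snd : Ω × (M × M) → Ω × M) ⁻¹' (A ×ˢ D)
        = A ×ˢ (Prod.snd ⁻¹' D) := rfl
    rw [this, hrect n hA hD, hrect 0 hA hD]
  let Qs : ℕ → ProbabilityMeasure (Ω × (M × M)) := fun n => ⟨ν ⊗ₘ κ n, hprob n⟩
  have hc : Measurable (costFn ϑ : M × M → ℝ≥0∞) := measurable_costFn hϑ
  have hQcost (n : ℕ) : ∫⁻ z, costFn ϑ z.2 ∂(Qs n : Measure (Ω × (M × M)))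
      = β⁻¹ * ∫⁻ ω, ∫⁻ p, costFn ϑ p ∂(r n ω) ∂P :=
    lintegral_compProd_withDensity hh β⁻¹ (hrκ n) (F := fun z => costFn ϑ z.2)
      (hc.comp measurable_snd)
  obtain ⟨Q, φ, hφ, hQ⟩ := exists_subseq_tendsto hϑ Qs (R.map Prod.snd)
    (fun n => by
      rw [← hRn n, Measure.map_map measurable_snd hmeasS]
      rfl) (C := β⁻¹ * C) (ENNReal.mul_ne_top hβit hC) fun n => by
        rw [hQcost n]; gcongr; exact hcost n
  have hcontS : Continuous (Prod.map id Prod.snd : Ω × (M × M) → Ω × M) :=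
    continuous_id.prodMap continuous_snd
  have hQR : (Q : Measure (Ω × (M × M))).map (Prod.map id Prod.snd) = R := by
    have h1 := ProbabilityMeasure.tendsto_map_of_tendsto_of_continuous _ _ hQ hcontS
    have h2 : (fun n => ((Qs ∘ φ) n).map hcontS.measurable.aemeasurable)
        = fun _ => (⟨R, hRp⟩ : ProbabilityMeasure (Ω × M)) := by
      funext n
      exact Subtype.ext (hRn (φ n))
    rw [h2] at h1
    have h3 := tendsto_nhds_unique h1 tendsto_const_nhds
    exact congrArg (fun T : ProbabilityMeasure (Ω × M) => (T : Measure (Ω × M))) h3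
  have hQfst : (Q : Measure (Ω × (M × M))).fst = ν := by
    rw [← hfst 0]
    have h1 (T : Measure (Ω × (M × M))) : T.fst = (T.map (Prod.map id Prod.snd)).map Prod.fst := by
      rw [Measure.map_map measurable_fst hmeasS]; rfl
    rw [h1, h1 (ν ⊗ₘ κ 0), hQR]
  set κ' : ProbabilityTheory.Kernel Ω (M × M) := (Q : Measure (Ω × (M × M))).condKernel with hκ'
  have hQd : ν ⊗ₘ κ' = (Q : Measure (Ω × (M × M))) := by
    rw [← hQfst]; exact Measure.disintegrate _ _
  set q₀ : Ω → Measure (M × M) := fun ω => h ω • κ' ω with hq₀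
  have hq₀ae : ∀ᵐ ω ∂P, q₀ ω = h ω • κ' ω := Eventually.of_forall fun _ => rfl
  -- all estimates are transferred from the lifted measures by cancelling the factor `β⁻¹`
  have hcancel {x : ℝ≥0∞} {y : ℕ → ℝ≥0∞} (hxy : β⁻¹ * x ≤ atTop.liminf fun n => β⁻¹ * y n) :
      x ≤ atTop.liminf y := by
    rw [ENNReal.liminf_const_mul_of_ne_top hβit] at hxy
    exact (ENNReal.mul_le_mul_iff_right hβi0 hβit).1 hxy
  refine ⟨q₀, φ, hφ, ?_, ?_, fun A hA V hV => hcancel ?_, hcancel ?_⟩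
  · refine Measure.measurable_of_measurable_coe _ fun s hs => ?_
    simp only [hq₀, Measure.smul_apply, smul_eq_mul]
    exact hh.mul (κ'.measurable_coe hs)
  · have h1 : ν ⊗ₘ (κ 0).map Prod.snd = ν ⊗ₘ κ'.map Prod.snd := by
      rw [Measure.compProd_map measurable_snd, Measure.compProd_map measurable_snd, hQd, hQR]
    have h2 := ProbabilityTheory.Kernel.ae_eq_of_compProd_eq h1
    rw [Filter.EventuallyEq, hν, ae_withDensity_iff (hh.const_mul _)] at h2
    filter_upwards [h2, hrκ 0, hsnd 0] with ω h2 h3 h4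
    rw [← h4, h3]
    -- the kernels agree only `ν`-a.e., that is, up to the set where `h` vanishes
    by_cases h0 : h ω = 0
    · simp [hq₀, h0]
    · have h5 := h2 (mul_ne_zero hβi0 h0)
      rw [ProbabilityTheory.Kernel.map_apply _ measurable_snd,
        ProbabilityTheory.Kernel.map_apply _ measurable_snd] at h5
      simp only [hq₀, Measure.snd, Measure.map_smul, h5]
  · rw [← compProd_withDensity_prod hh β⁻¹ hq₀ae hA hV.measurableSet, ← hν, hQd]
    refine (le_liminf_prod_open hQ (fun n => hfst (φ n)) hA hV).trans (le_of_eq ?_)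
    congr 1
    funext n
    exact compProd_withDensity_prod hh β⁻¹ (hrκ (φ n)) hA hV.measurableSet
  · rw [← lintegral_compProd_withDensity hh β⁻¹ hq₀ae (F := fun z => costFn ϑ z.2)
      (hc.comp measurable_snd), ← hν, hQd]
    simp_rw [← hQcost]
    have hpos : (0 : Ω × (M × M) → ℝ) ≤ fun z => ϑ (dist z.2.1 z.2.2) := fun z => by
      have := hϑ.strictMono.monotoneOn (Set.mem_Ici.2 le_rfl) (Set.mem_Ici.2 dist_nonneg)
        (dist_nonneg (x := z.2.1) (y := z.2.2))
      rwa [hϑ.map_zero] at this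
    exact lintegral_le_liminf_lintegral_of_forall_isOpen_measure_le_liminf_measure
      (f := fun z : Ω × (M × M) => ϑ (dist z.2.1 z.2.2))
      (hϑ.continuous.comp (by fun_prop)) hpos fun G hG =>
      ProbabilityMeasure.le_liminf_measure_open_of_tendsto hQ hG

end Helpers

theorem exists_optimal_equivariant_semicoupling
    {M : Type*} [MetricSpace M] [MeasurableSpace M] [BorelSpace M]
    [ProperSpace M] [SecondCountableTopology M]
    {Ω : Type*} [MetricSpace Ω] [CompactSpace Ω] [MeasurableSpace Ω] [BorelSpace Ω]
    (G : Type*) [Group G] [Countable G] [MulAction G M]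
    (m : Measure M) [IsLocallyFiniteMeasure m]
    (hiso : ∀ g : G, Isometry (fun x : M => g • x))
    (hmp : ∀ g : G, MeasurePreserving (fun x : M => g • x) m m)
    (hpd : ProperlyDiscontinuousAct (M := M) G) (hcc : CocompactAct (M := M) G)
    (hfree : FreeAct (M := M) G)
    (B0 : Set M) (hB0 : IsFundDom G B0) (hB0vol : m B0 = 1)
    (ϑ : ℝ → ℝ) (hϑ : IsScaleFn ϑ)
    (P : Measure Ω) [IsProbabilityMeasure P]
    (θ : G → Ω → Ω) (hθ : IsFlow θ) (hstat : Stationary θ P)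
    (lam mu : Ω → Measure M) (hlammeas : Measurable lam) (hmumeas : Measurable mu)
    (hlameq : EquivRandMeasure θ lam) (hmueq : EquivRandMeasure θ mu)
    (β : ℝ≥0∞) (hβ : β ≤ 1)
    (hlamint : HasIntensity m P lam 1) (hmuint : HasIntensity m P mu β)
    -- the random measures are a.s. nonzero
    (hlamne : ∀ᵐ ω ∂P, lam ω ≠ 0) (hmune : ∀ᵐ ω ∂P, mu ω ≠ 0)
    -- finite optimal mean transportation cost
    (hfin : ceInftySemi G m P ϑ θ lam mu ≠ ⊤) :
    ∃ q : Ω → Measure (M × M),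
      IsRandSemicoupling P lam mu q ∧ EquivRandCoupling θ q ∧
        meanCost G m P ϑ q = ceInftySemi G m P ϑ θ lam mu := by
  have hsm : MeasurableConstSMul G M := ⟨fun g => (hiso g).continuous.measurable⟩
  have hne : Nonempty M := by
    by_contra hM
    rw [not_nonempty_iff] at hM
    simp [Set.eq_empty_of_isEmpty B0] at hB0vol
  have hβt : β ≠ ∞ := ne_top_of_le_ne_top ENNReal.one_ne_top hβ
  -- intensity zero would force `mu` to vanish almost surely
  have hβ0 : β ≠ 0 := by
    rintro rfl
    have h1 := hmuint Set.univ MeasurableSet.univ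
    have h0 : Measurable fun ω => mu ω Set.univ :=
      (Measure.measurable_coe MeasurableSet.univ).comp hmumeas
    rw [zero_mul, lintegral_eq_zero_iff h0] at h1
    obtain ⟨ω, h2, h3⟩ := (h1.and hmune).exists
    exact h3 (Measure.measure_univ_eq_zero.1 h2)
  have hint : ∫⁻ ω, mu ω B0 ∂P = β := by rw [hmuint B0 hB0.1, hB0vol, mul_one]
  have hS : MeasurableSet (Set.univ ×ˢ B0 : Set (M × M)) := MeasurableSet.univ.prod hB0.1
  have hmin (n : ℕ) : ∃ q : Ω → Measure (M × M),
      (IsRandSemicoupling P lam mu q ∧ EquivRandCoupling θ q) ∧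
        meanCost G m P ϑ q < ceInftySemi G m P ϑ θ lam mu + ((n : ℝ≥0∞) + 1)⁻¹ := by
    have h1 : ceInftySemi G m P ϑ θ lam mu
        < ceInftySemi G m P ϑ θ lam mu + ((n : ℝ≥0∞) + 1)⁻¹ :=
      ENNReal.lt_add_right hfin (by simp)
    conv_lhs at h1 => rw [ceInftySemi]
    obtain ⟨q, h2⟩ := iInf_lt_iff.1 h1
    obtain ⟨h3, h4⟩ := iInf_lt_iff.1 h2
    exact ⟨q, h3, h4⟩
  choose q hq hqc using hmin
  set r : ℕ → Ω → Measure (M × M) := fun n ω => (q n ω).restrict (Set.univ ×ˢ B0) with hrdef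
  have hr (n : ℕ) : Measurable (r n) := by
    refine Measure.measurable_of_measurable_coe _ fun s hs => ?_
    simp only [hrdef, Measure.restrict_apply hs]
    exact (Measure.measurable_coe (hs.inter hS)).comp (hq n).1.1
  have hrcost (n : ℕ) : ∫⁻ ω, ∫⁻ p, costFn ϑ p ∂(r n ω) ∂P = meanCost G m P ϑ (q n) :=
    (meanCost_eq hiso hmp hB0 hB0vol hϑ hθ hstat (hq n).1.1 (hq n).2).symm
  have hrsnd (n : ℕ) : ∀ᵐ ω ∂P, (r n ω).snd = (mu ω).restrict B0 := by
    filter_upwards [(hq n).1.2] with ω hω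
    rw [← hω.2, Measure.snd, Measure.snd, Measure.restrict_map measurable_snd hB0.1,
      ← Set.univ_prod]
  obtain ⟨q₀, φ, hφ, hq₀, hsnd, hopen, hcost⟩ := exists_limit_plan hϑ hmumeas hB0.1 hβ0 hβt hint
    hr hrsnd (C := ceInftySemi G m P ϑ θ lam mu + 1) (by simp [hfin]) fun n => by
      rw [hrcost n]
      refine (hqc n).le.trans ?_
      gcongr
      exact ENNReal.inv_le_one.2 le_add_self
  have hqm : Measurable (periodize θ q₀) := measurable_periodize hθ hq₀
  have hqe : EquivRandCoupling θ (periodize θ q₀) := equiv_periodize hθ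
  have hfst : ∀ᵐ ω ∂P, (periodize θ q₀ ω).fst ≤ lam ω := by
    refine ae_le_of_open (ρ := fun ω => (periodize θ q₀ ω).fst)
      ((Measure.measurable_map _ measurable_fst).comp hqm)
      (ae_isLocallyFiniteMeasure (Classical.arbitrary M) hlammeas hlamint) fun U hU A hA => ?_
    have hV : IsOpen (Prod.fst ⁻¹' U : Set (M × M)) := hU.preimage continuous_fst
    have hVg (g : G) : IsOpen (diagAct g ⁻¹' (Prod.fst ⁻¹' U) : Set (M × M)) :=
      hV.preimage (((hiso g).continuous.comp continuous_fst).prodMk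
        ((hiso g).continuous.comp continuous_snd))
    have hsum {r : Ω → Measure (M × M)} (hr : Measurable r) :
        ∫⁻ ω in A, periodize θ r ω (Prod.fst ⁻¹' U) ∂P
          = ∑' g : G, ∫⁻ ω in θ g ⁻¹' A, r ω (diagAct g ⁻¹' (Prod.fst ⁻¹' U)) ∂P := by
      have := lintegral_lintegral_periodize hθ hstat hr hA
        (measurable_one.indicator hV.measurableSet)
      simp_rw [lintegral_indicator_one hV.measurableSet] at this
      rw [this]
      refine tsum_congr fun g => lintegral_congr fun ω => ?_
      exact lintegral_indicator_one (hVg g).measurableSet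
    simp_rw [Measure.fst_apply hU.measurableSet]
    calc ∫⁻ ω in A, periodize θ q₀ ω (Prod.fst ⁻¹' U) ∂P
        = ∑' g : G, ∫⁻ ω in θ g ⁻¹' A, q₀ ω (diagAct g ⁻¹' (Prod.fst ⁻¹' U)) ∂P := hsum hq₀
      _ ≤ ∑' g : G, atTop.liminf fun n =>
            ∫⁻ ω in θ g ⁻¹' A, r (φ n) ω (diagAct g ⁻¹' (Prod.fst ⁻¹' U)) ∂P :=
          ENNReal.tsum_le_tsum fun g => hopen _ (hθ.measurable g hA) _ (hVg g)
      _ ≤ atTop.liminf fun n => ∑' g : G,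
            ∫⁻ ω in θ g ⁻¹' A, r (φ n) ω (diagAct g ⁻¹' (Prod.fst ⁻¹' U)) ∂P :=
          tsum_liminf_le _
      _ = atTop.liminf fun n => ∫⁻ ω in A, q (φ n) ω (Prod.fst ⁻¹' U) ∂P := by
          congr 1
          funext n
          rw [← hsum (hr (φ n))]
          simp_rw [hrdef, periodize_restrict hB0 (hq (φ n)).2]
      _ ≤ atTop.liminf fun _ : ℕ => ∫⁻ ω in A, lam ω U ∂P := by
          refine liminf_le_liminf (Eventually.of_forall fun n => ?_)
          refine lintegral_mono_ae (ae_restrict_of_ae ?_)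
          filter_upwards [(hq (φ n)).1.2] with ω hω
          rw [← Measure.fst_apply hU.measurableSet]
          exact hω.1 U
      _ = ∫⁻ ω in A, lam ω U ∂P := liminf_const _
  have hsemi : IsRandSemicoupling P lam mu (periodize θ q₀) := by
    refine ⟨hqm, ?_⟩
    filter_upwards [hfst, ae_snd_periodize hB0 hθ hstat hmueq hsnd] with ω h1 h2
    exact ⟨h1, h2⟩
  refine ⟨periodize θ q₀, hsemi, hqe, le_antisymm ?_ (iInf₂_le _ ⟨hsemi, hqe⟩)⟩
  rw [meanCost_eq hiso hmp hB0 hB0vol hϑ hθ hstat hqm hqe,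
    cost_periodize hiso hB0 hϑ hθ hstat hq₀]
  refine hcost.trans ?_
  simp_rw [hrcost]
  have hlim : Tendsto (fun n => ceInftySemi G m P ϑ θ lam mu + (((φ n : ℕ) : ℝ≥0∞) + 1)⁻¹) atTop
      (𝓝 (ceInftySemi G m P ϑ θ lam mu + 0)) := by
    refine Tendsto.const_add _ ?_
    have h1 : Tendsto (fun n : ℕ => ((n : ℝ≥0∞) + 1)⁻¹) atTop (𝓝 0) := by
      have := (tendsto_add_atTop_iff_nat 1).2 ENNReal.tendsto_inv_nat_nhds_zero
      simpa using this
    exact h1.comp hφ.tendsto_atTop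
  rw [add_zero] at hlim
  rw [← hlim.liminf_eq]
  exact liminf_le_liminf (Eventually.of_forall fun n => (hqc (φ n)).le)
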